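/- Let n ≥ 5 and let F be a stacked (n-1)-sphere with exactly 3n+1 vertices. Let F_1 ≠ F_2 be two facets of F and let φ : F_1 → F_2 be a bijection such that for every v ∈ F_1 the graph distance between v and φ(v) in the 1-skeleton of F is at least 3. Let q be the map on vertices defined by q(w) = w for w not in F_2 and q(φ(v)) = v for v ∈ F_1, and let M = { q(G) : G a facet of F, G ≠ F_1, G ≠ F_2 } be the resulting identified stacked sphere on the 2n+1 vertices V(F) \ F_2. Then M is combinatorially isomorphic to Kühnel's complex K_n: there is a bijection ψ from V(F) \ F_2 to ℤ/(2n+1) such that a set S is a member of M if and only if ψ(S) is a facet of K_n. (This is the combinatorial content of the theorem that every minimal identified stacked sphere is isomorphic to M^n.) -/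

import Mathlib

/-- A family of `n`-element subsets of `V` is a stacked `(n-1)`-sphere if it is
the set of facets of the boundary of an `n`-simplex, or is obtained from a
stacked `(n-1)`-sphere by subdividing a facet `T` at a new vertex `v`. -/
inductive IsStackedSphere {V : Type*} [DecidableEq V] (n : ℕ) : Finset (Finset V) → Prop
  | simplex (W : Finset V) (hW : W.card = n + 1) :
      IsStackedSphere n (W.powersetCard n)
  | subdivide (F : Finset (Finset V)) (T : Finset V) (v : V)
      (hF : IsStackedSphere n F) (hT : T ∈ F)
      (hv : ∀ S ∈ F, v ∉ S) :
      IsStackedSphere n (F.erase T ∪ T.image (fun t => insert v (T.erase t)))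

/-- The 1-skeleton of a family `F` of facets: two distinct vertices are
adjacent iff they lie in a common member of `F`. -/
def famSkeleton {V : Type*} (F : Finset (Finset V)) : SimpleGraph V :=
  SimpleGraph.fromRel (fun a b => ∃ S ∈ F, a ∈ S ∧ b ∈ S)

/-- `S` is a facet of Kühnel's complex `K_n` on vertex set `ℤ/(2n+1)`: `S` is an
`n`-element subset of some cyclic interval `{a, a+1, …, a+n}` which is not a
cyclic interval `{b, b+1, …, b+n-1}`. -/
def KuhnelFacet (n : ℕ) (S : Finset (ZMod (2 * n + 1))) : Prop :=
  S.card = n ∧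
    (∃ a : ZMod (2 * n + 1), S ⊆ (Finset.range (n + 1)).image (fun k : ℕ => a + (k : ZMod (2 * n + 1)))) ∧
    (∀ b : ZMod (2 * n + 1), S ≠ (Finset.range n).image (fun k : ℕ => b + (k : ZMod (2 * n + 1))))

/-!
For `n ≥ 3` the 1-skeleton of a stacked sphere determines the sphere: a subdivision joins the new
vertex to a clique, so there is no induced 4-cycle, no clique has more than `n + 1` vertices, the
number of edges depends only on the number of vertices, and the facets are the `n`-cliques contained
in exactly one `(n + 1)`-clique.

With `3n + 1` vertices there are as many edges as pairs of vertices in the quotient, apart from the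
edges of `F₂`, which fall on those of `F₁`. The distance condition keeps the other edges from
collapsing or coinciding, so they hit each pair once. Hence the `n + 1` vertices outside `F₁ ∪ F₂`
form a clique, and each of them is adjacent to exactly one of `x` and `φ x`. The neighbourhoods of
the vertices of `F₁` in this clique are nested, since there is no induced 4-cycle, and the bound on
cliques then forces their sizes to be `1, …, n`.

So the vertices can be laid out at the positions `0, …, 3n`, first `F₂` and last `F₁`, such that two
of them are adjacent exactly when their positions differ by at most `n`, and `φ x` stands `2n + 1`
places to the left of `x`. The facets other than `F₁` and `F₂` are then the sets `{a, …, a + n}`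
without one interior element, and reduction modulo `2n + 1` turns them into the facets of `K_n`.
-/

section Skeleton

open Finset

variable {V : Type*}

/-- Two vertices are cofacial if some member of `F` contains both. This is the relation
of being equal or adjacent in the 1-skeleton of `F`, restricted to the vertices of `F`. -/
def Cofacial (F : Finset (Finset V)) (a b : V) : Prop :=
  ∃ S ∈ F, a ∈ S ∧ b ∈ S

/-- A face clique is a set of vertices of `F` that forms a clique of the 1-skeleton. The case
`a = b` of the condition forces the members of `Q` to be vertices of `F`. -/
def IsFaceClique (F : Finset (Finset V)) (Q : Finset V) : Prop :=
  ∀ a ∈ Q, ∀ b ∈ Q, Cofacial F a b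

theorem Cofacial.symm {F : Finset (Finset V)} {a b : V} (h : Cofacial F a b) : Cofacial F b a := by
  obtain ⟨S, hS, ha, hb⟩ := h
  exact ⟨S, hS, hb, ha⟩

theorem cofacial_comm {F : Finset (Finset V)} {a b : V} : Cofacial F a b ↔ Cofacial F b a :=
  ⟨Cofacial.symm, Cofacial.symm⟩

theorem isFaceClique_of_mem {F : Finset (Finset V)} {S : Finset V} (hS : S ∈ F) :
    IsFaceClique F S :=
  fun _ ha _ hb => ⟨S, hS, ha, hb⟩

theorem IsFaceClique.mono {F : Finset (Finset V)} {A B : Finset V} (hB : IsFaceClique F B)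
    (hAB : A ⊆ B) : IsFaceClique F A :=
  fun a ha b hb => hB a (hAB ha) b (hAB hb)

theorem Cofacial.exists_walk {F : Finset (Finset V)} {a b : V} (h : Cofacial F a b) :
    ∃ p : (famSkeleton F).Walk a b, p.length ≤ 1 := by
  obtain rfl | hab := eq_or_ne a b
  · exact ⟨.nil, by simp⟩
  · have hadj : (famSkeleton F).Adj a b := (SimpleGraph.fromRel_adj _ _ _).2 ⟨hab, Or.inl h⟩
    exact ⟨hadj.toWalk, by simp⟩

theorem dist_famSkeleton_le_two {F : Finset (Finset V)} {a b c : V} (hab : Cofacial F a b)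
    (hbc : Cofacial F b c) : (famSkeleton F).dist a c ≤ 2 := by
  obtain ⟨p, hp⟩ := hab.exists_walk
  obtain ⟨r, hr⟩ := hbc.exists_walk
  have hdist := SimpleGraph.dist_le (p.append r)
  rw [SimpleGraph.Walk.length_append] at hdist
  lia

theorem cofacial_powersetCard {n : ℕ} {W : Finset V} (hn : 2 ≤ n) (hW : n ≤ #W) {a b : V} :
    Cofacial (W.powersetCard n) a b ↔ a ∈ W ∧ b ∈ W := by
  classical
  constructor
  · rintro ⟨S, hS, ha, hb⟩
    have hSW := (mem_powersetCard.1 hS).1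
    exact ⟨hSW ha, hSW hb⟩
  · rintro ⟨ha, hb⟩
    obtain ⟨S, habS, hSW, hS⟩ := exists_subsuperset_card_eq
      (insert_subset ha (singleton_subset_iff.2 hb)) (card_le_two.trans hn) hW
    exact ⟨S, mem_powersetCard.2 ⟨hSW, hS⟩, habS (by simp), habS (by simp)⟩

theorem isFaceClique_powersetCard {n : ℕ} {W : Finset V} (hn : 2 ≤ n) (hW : n ≤ #W)
    {Q : Finset V} :
    IsFaceClique (W.powersetCard n) Q ↔ Q ⊆ W := by
  simp only [IsFaceClique, cofacial_powersetCard hn hW]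
  exact ⟨fun h a ha => (h a ha a ha).1, fun h a ha b hb => ⟨h ha, h hb⟩⟩

variable [DecidableEq V]

instance (F : Finset (Finset V)) : DecidableRel (Cofacial F) :=
  fun a b => inferInstanceAs (Decidable (∃ S ∈ F, a ∈ S ∧ b ∈ S))

/-- The ordered pairs of cofacial vertices. Their number is `f₀ + 2 f₁`, where `f₀` and `f₁` count
the vertices and the edges of the 1-skeleton. -/
def cofacialPairs (F : Finset (Finset V)) : Finset (V × V) :=
  F.biUnion fun S => S ×ˢ S

/-- An apex over `S` is a vertex outside `S` whose addition to `S` yields a face clique. -/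
def IsApex (F : Finset (Finset V)) (S : Finset V) (u : V) : Prop :=
  u ∉ S ∧ IsFaceClique F (insert u S)

/-- The 1-skeleton of `F` has no induced 4-cycle. Degenerate cycles need no exclusion: they have a
diagonal that is a point or a side. -/
def NoInducedFourCycle (F : Finset (Finset V)) : Prop :=
  ∀ ⦃a b c d⦄, Cofacial F a b → Cofacial F b c → Cofacial F c d → Cofacial F d a →
    Cofacial F a c ∨ Cofacial F b d

/-- The stellar subdivision of the member `T` of `F` at `v`. -/
def subdivision (F : Finset (Finset V)) (T : Finset V) (v : V) : Finset (Finset V) :=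
  F.erase T ∪ T.image (fun t => insert v (T.erase t))

theorem mem_cofacialPairs {F : Finset (Finset V)} {a b : V} :
    (a, b) ∈ cofacialPairs F ↔ Cofacial F a b := by
  simp [cofacialPairs, Cofacial]

theorem mem_biUnion_id_iff_cofacial {F : Finset (Finset V)} {a : V} :
    a ∈ F.biUnion id ↔ Cofacial F a a := by
  simp [Cofacial]

theorem Cofacial.left_mem {F : Finset (Finset V)} {a b : V} (h : Cofacial F a b) :
    a ∈ F.biUnion id := by
  obtain ⟨S, hS, ha, -⟩ := h
  exact mem_biUnion.2 ⟨S, hS, ha⟩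

theorem IsFaceClique.subset_biUnion {F : Finset (Finset V)} {Q : Finset V}
    (h : IsFaceClique F Q) : Q ⊆ F.biUnion id :=
  fun a ha => (h a ha a ha).left_mem

theorem IsFaceClique.union {F : Finset (Finset V)} {A B : Finset V} (hA : IsFaceClique F A)
    (hB : IsFaceClique F B) (hAB : ∀ a ∈ A, ∀ b ∈ B, Cofacial F a b) : IsFaceClique F (A ∪ B) := by
  intro a ha b hb
  obtain ha | ha := mem_union.1 ha <;> obtain hb | hb := mem_union.1 hb
  · exact hA a ha b hb
  · exact hAB a ha b hb
  · exact (hAB b hb a ha).symm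
  · exact hB a ha b hb

theorem existsUnique_insert_subset {S W : Finset V} (hSW : S ⊆ W) (hcard : #S + 1 = #W) :
    ∃! u, u ∉ S ∧ insert u S ⊆ W := by
  obtain ⟨u, hu, rfl⟩ := exists_eq_insert_iff.2 ⟨hSW, hcard⟩
  refine ⟨u, ⟨hu, Subset.rfl⟩, fun y ⟨hy, hyS⟩ => ?_⟩
  exact (mem_insert.1 (hyS (mem_insert_self y S))).resolve_right hy

section Subdivision

variable {F : Finset (Finset V)} {T Q S : Finset V} {v a b : V}

theorem mem_subdivision (hv : v ∉ T) :
    S ∈ subdivision F T v ↔ S ∈ F ∧ S ≠ T ∨ v ∈ S ∧ S ⊆ insert v T ∧ #S = #T := by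
  have hnew : S ∈ T.image (fun t => insert v (T.erase t)) ↔
      v ∈ S ∧ S ⊆ insert v T ∧ #S = #T := by
    rw [mem_image]
    constructor
    · rintro ⟨t, ht, rfl⟩
      refine ⟨mem_insert_self _ _, insert_subset_insert _ (erase_subset _ _), ?_⟩
      rw [card_insert_of_notMem (fun h => hv (mem_of_mem_erase h)), card_erase_add_one ht]
    · rintro ⟨hvS, hST, hcard⟩
      obtain ⟨t, ht, htS⟩ := exists_eq_insert_iff.2
        ⟨hST, by rw [hcard, card_insert_of_notMem hv]⟩
      have hvt : v ≠ t := ne_of_mem_of_not_mem hvS ht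
      have htT : t ∈ T := mem_of_mem_insert_of_ne (htS ▸ mem_insert_self t S) hvt.symm
      exact ⟨t, htT, by rw [← erase_insert_of_ne hvt, ← htS, erase_insert ht]⟩
  rw [subdivision, mem_union, hnew, mem_erase, and_comm (a := S ≠ T)]

theorem cofacial_subdivision (hT : T ∈ F) (hcard : 3 ≤ #T) (hv : v ∉ T) :
    Cofacial (subdivision F T v) a b ↔ Cofacial F a b ∨ a ∈ insert v T ∧ b ∈ insert v T := by
  have hnew (ha : a ∈ insert v T) (hb : b ∈ insert v T) : Cofacial (subdivision F T v) a b := by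
    have hsub : {v, a, b} ⊆ insert v T := by
      simp [insert_subset_iff, mem_insert.1 ha, mem_insert.1 hb]
    obtain ⟨S, habS, hST, hS⟩ := exists_subsuperset_card_eq hsub (card_le_three.trans hcard)
      (card_le_card (subset_insert v T))
    exact ⟨S, (mem_subdivision hv).2 (Or.inr ⟨habS (by simp), hST, hS⟩),
      habS (by simp), habS (by simp)⟩
  constructor
  · rintro ⟨S, hS, ha, hb⟩
    obtain ⟨hSF, -⟩ | ⟨-, hST, -⟩ := (mem_subdivision hv).1 hS
    · exact Or.inl ⟨S, hSF, ha, hb⟩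
    · exact Or.inr ⟨hST ha, hST hb⟩
  · rintro (⟨S, hS, ha, hb⟩ | ⟨ha, hb⟩)
    · obtain rfl | hST := eq_or_ne S T
      · exact hnew (mem_insert_of_mem ha) (mem_insert_of_mem hb)
      · exact ⟨S, (mem_subdivision hv).2 (Or.inl ⟨hS, hST⟩), ha, hb⟩
    · exact hnew ha hb

variable (hT : T ∈ F) (hcard : 3 ≤ #T) (hv : ∀ S ∈ F, v ∉ S)

include hT hcard hv

theorem cofacial_subdivision_apex :
    Cofacial (subdivision F T v) v b ↔ b ∈ insert v T := by
  have hvF : ¬ Cofacial F v b := fun ⟨S, hS, hvS, _⟩ => hv S hS hvS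
  simp [cofacial_subdivision hT hcard (hv T hT), hvF]

theorem cofacial_subdivision_of_ne (ha : a ≠ v) (hb : b ≠ v) :
    Cofacial (subdivision F T v) a b ↔ Cofacial F a b := by
  rw [cofacial_subdivision hT hcard (hv T hT), or_iff_left_of_imp]
  exact fun ⟨haT, hbT⟩ =>
    ⟨T, hT, mem_of_mem_insert_of_ne haT ha, mem_of_mem_insert_of_ne hbT hb⟩

theorem isFaceClique_subdivision_of_mem (hvQ : v ∈ Q) :
    IsFaceClique (subdivision F T v) Q ↔ Q ⊆ insert v T := by
  constructor
  · exact fun h a ha => (cofacial_subdivision_apex hT hcard hv).1 (h v hvQ a ha)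
  · exact fun h a ha b hb =>
      (cofacial_subdivision hT hcard (hv T hT)).2 (Or.inr ⟨h ha, h hb⟩)

theorem isFaceClique_subdivision_of_notMem (hvQ : v ∉ Q) :
    IsFaceClique (subdivision F T v) Q ↔ IsFaceClique F Q := by
  refine forall₂_congr fun a ha => forall₂_congr fun b hb => ?_
  exact cofacial_subdivision_of_ne hT hcard hv (ne_of_mem_of_not_mem ha hvQ)
    (ne_of_mem_of_not_mem hb hvQ)

theorem biUnion_id_subdivision :
    (subdivision F T v).biUnion id = insert v (F.biUnion id) := by
  ext a
  rw [mem_biUnion_id_iff_cofacial, mem_insert, mem_biUnion_id_iff_cofacial]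
  obtain rfl | ha := eq_or_ne a v
  · simp [cofacial_subdivision_apex hT hcard hv]
  · simp [cofacial_subdivision_of_ne hT hcard hv ha ha, ha]

theorem cofacialPairs_subdivision :
    cofacialPairs (subdivision F T v) =
      cofacialPairs F ∪ (({v} : Finset V) ×ˢ insert v T ∪ T ×ˢ {v}) := by
  ext ⟨a, b⟩
  have hvF (c : V) : ¬ Cofacial F v c := fun ⟨S, hS, hvS, _⟩ => hv S hS hvS
  simp only [mem_union, mem_product, mem_singleton, mem_cofacialPairs]
  obtain rfl | ha := eq_or_ne a v
  · simp [cofacial_subdivision_apex hT hcard hv, hvF, hv T hT]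
  obtain rfl | hb := eq_or_ne b v
  · simp [cofacial_comm (a := a), cofacial_subdivision_apex hT hcard hv, hvF, ha]
  · simp [cofacial_subdivision_of_ne hT hcard hv ha hb, ha, hb]

theorem card_cofacialPairs_subdivision :
    #(cofacialPairs (subdivision F T v)) = #(cofacialPairs F) + (2 * #T + 1) := by
  have hvT := hv T hT
  have hold : Disjoint (cofacialPairs F) (({v} : Finset V) ×ˢ insert v T ∪ T ×ˢ {v}) := by
    rw [disjoint_left]
    rintro ⟨a, b⟩ hab hnew
    obtain ⟨S, hS, ha, hb⟩ := mem_cofacialPairs.1 hab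
    simp only [mem_union, mem_product, mem_singleton] at hnew
    obtain ⟨rfl, -⟩ | ⟨-, rfl⟩ := hnew
    · exact hv S hS ha
    · exact hv S hS hb
  have hsides : Disjoint (({v} : Finset V) ×ˢ insert v T) (T ×ˢ {v}) :=
    disjoint_product.2 (Or.inl (disjoint_singleton_left.2 hvT))
  rw [cofacialPairs_subdivision hT hcard hv, card_union_of_disjoint hold,
    card_union_of_disjoint hsides, card_product, card_product, card_insert_of_notMem hvT,
    card_singleton]
  ring

theorem noInducedFourCycle_subdivision (hF : NoInducedFourCycle F) :
    NoInducedFourCycle (subdivision F T v) := by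
  intro a b c d hab hbc hcd hda
  have hsimplicial {x y : V} (hx : Cofacial (subdivision F T v) v x)
      (hy : Cofacial (subdivision F T v) v y) : Cofacial (subdivision F T v) x y :=
    (cofacial_subdivision hT hcard (hv T hT)).2
      (Or.inr ⟨(cofacial_subdivision_apex hT hcard hv).1 hx,
        (cofacial_subdivision_apex hT hcard hv).1 hy⟩)
  obtain rfl | ha := eq_or_ne a v
  · exact Or.inr (hsimplicial hab hda.symm)
  obtain rfl | hb := eq_or_ne b v
  · exact Or.inl (hsimplicial hab.symm hbc)
  obtain rfl | hc := eq_or_ne c v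
  · exact Or.inr (hsimplicial hbc.symm hcd)
  obtain rfl | hd := eq_or_ne d v
  · exact Or.inl (hsimplicial hda hcd.symm)
  rw [cofacial_subdivision_of_ne hT hcard hv] at hab hbc hcd hda ⊢ <;> try assumption
  rw [cofacial_subdivision_of_ne hT hcard hv hb hd]
  exact hF hab hbc hcd hda

theorem mem_subdivision_iff_of_mem (hvS : v ∈ S) :
    S ∈ subdivision F T v ↔
      #S = #T ∧ IsFaceClique (subdivision F T v) S ∧ ∃! u, IsApex (subdivision F T v) S u := by
  have happex (u : V) :
      IsApex (subdivision F T v) S u ↔ u ∉ S ∧ insert u S ⊆ insert v T := by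
    rw [IsApex, isFaceClique_subdivision_of_mem hT hcard hv (mem_insert_of_mem hvS)]
  simp only [isFaceClique_subdivision_of_mem hT hcard hv hvS, happex,
    mem_subdivision (hv T hT), hvS, true_and]
  constructor
  · rintro (⟨hSF, -⟩ | ⟨hST, hS⟩)
    · exact absurd hvS (hv S hSF)
    · exact ⟨hS, hST, existsUnique_insert_subset hST (by rw [hS, card_insert_of_notMem (hv T hT)])⟩
  · exact fun ⟨hS, hST, _⟩ => Or.inr ⟨hST, hS⟩

theorem isApex_subdivision_of_ne {u : V} (hvS : v ∉ S) (hu : u ≠ v) :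
    IsApex (subdivision F T v) S u ↔ IsApex F S u := by
  rw [IsApex, IsApex, isFaceClique_subdivision_of_notMem hT hcard hv (by simp [hu.symm, hvS])]

theorem isApex_subdivision_apex (hvS : v ∉ S) :
    IsApex (subdivision F T v) S v ↔ S ⊆ T := by
  rw [IsApex, isFaceClique_subdivision_of_mem hT hcard hv (mem_insert_self v S),
    insert_subset_insert_iff hvS, and_iff_right hvS]

omit hT hcard in
theorem IsApex.ne_of_forall_notMem {u : V} (h : IsApex F S u) : u ≠ v := by
  rintro rfl
  obtain ⟨S, hS, huS, -⟩ := h.2 u (mem_insert_self _ _) u (mem_insert_self _ _)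
  exact hv S hS huS

theorem not_existsUnique_isApex_subdivision (hapex : ∃ u, IsApex F T u) :
    ¬ ∃! u, IsApex (subdivision F T v) T u := by
  obtain ⟨w, hw⟩ := hapex
  have hwv : w ≠ v := hw.ne_of_forall_notMem hv
  exact fun h => hwv (h.unique
    ((isApex_subdivision_of_ne hT hcard hv (hv T hT) hwv).2 hw)
    ((isApex_subdivision_apex hT hcard hv (hv T hT)).2 Subset.rfl))

theorem isApex_subdivision_iff {u : V} (hvS : v ∉ S) (hST : S ≠ T) (hS : #S = #T) :
    IsApex (subdivision F T v) S u ↔ IsApex F S u := by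
  obtain rfl | hu := eq_or_ne u v
  · rw [isApex_subdivision_apex hT hcard hv hvS]
    exact iff_of_false (fun h => hST (eq_of_subset_of_card_le h hS.ge))
      fun h => h.ne_of_forall_notMem hv rfl
  · exact isApex_subdivision_of_ne hT hcard hv hvS hu

end Subdivision

namespace IsStackedSphere

variable {n : ℕ} {F : Finset (Finset V)}

theorem card_of_mem (hF : IsStackedSphere n F) {S : Finset V} (hS : S ∈ F) : #S = n := by
  induction hF generalizing S with
  | simplex => exact (mem_powersetCard.1 hS).2
  | subdivide F T v _ hT hv ih =>
    obtain ⟨hSF, -⟩ | ⟨-, -, hcard⟩ := (mem_subdivision (hv T hT)).1 hS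
    · exact ih hSF
    · exact hcard.trans (ih hT)

theorem card_le_of_isFaceClique (hF : IsStackedSphere n F) (hn : 3 ≤ n) {Q : Finset V}
    (hQ : IsFaceClique F Q) : #Q ≤ n + 1 := by
  induction hF generalizing Q with
  | simplex W hW =>
    rw [← hW]
    exact card_le_card ((isFaceClique_powersetCard (by lia) (by lia)).1 hQ)
  | subdivide F T v hF hT hv ih =>
    have hTn := hF.card_of_mem hT
    by_cases hvQ : v ∈ Q
    · have hQT := (isFaceClique_subdivision_of_mem hT (by lia) hv hvQ).1 hQ
      simpa [card_insert_of_notMem (hv T hT), hTn] using card_le_card hQT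
    · exact ih ((isFaceClique_subdivision_of_notMem hT (by lia) hv hvQ).1 hQ)

theorem noInducedFourCycle (hF : IsStackedSphere n F) (hn : 3 ≤ n) : NoInducedFourCycle F := by
  induction hF with
  | simplex W hW =>
    intro a b c d hab _ hcd _
    rw [cofacial_powersetCard (by lia) (by lia)] at *
    exact Or.inl ⟨hab.1, hcd.1⟩
  | subdivide F T v hF hT hv ih =>
    exact noInducedFourCycle_subdivision hT (by rwa [hF.card_of_mem hT]) hv ih

theorem card_cofacialPairs (hF : IsStackedSphere n F) (hn : 3 ≤ n) :
    #(cofacialPairs F) + n * (n + 1) = (2 * n + 1) * #(F.biUnion id) := by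
  induction hF with
  | simplex W hW =>
    have hcofacial {a b : V} : Cofacial (W.powersetCard n) a b ↔ a ∈ W ∧ b ∈ W :=
      cofacial_powersetCard (by lia) (by lia)
    have hverts : (W.powersetCard n).biUnion id = W := by
      ext a
      rw [mem_biUnion_id_iff_cofacial, hcofacial, and_self]
    have hpairs : cofacialPairs (W.powersetCard n) = W ×ˢ W := by
      ext ⟨a, b⟩
      rw [mem_cofacialPairs, hcofacial, mem_product]
    rw [hverts, hpairs, card_product, hW]
    ring
  | subdivide F T v hF hT hv ih =>
    have hTn := hF.card_of_mem hT
    have hvF : v ∉ F.biUnion id := by simpa using hv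
    change #(cofacialPairs (subdivision F T v)) + _ = _ * #((subdivision F T v).biUnion id)
    rw [card_cofacialPairs_subdivision hT (by lia) hv, biUnion_id_subdivision hT (by lia) hv,
      card_insert_of_notMem hvF, hTn]
    linarith

theorem mem_iff (hF : IsStackedSphere n F) (hn : 3 ≤ n) {S : Finset V} :
    S ∈ F ↔ #S = n ∧ IsFaceClique F S ∧ ∃! u, IsApex F S u := by
  induction hF generalizing S with
  | simplex W hW =>
    simp only [IsApex, isFaceClique_powersetCard (W := W) (n := n) (by lia) (by lia)]
    rw [mem_powersetCard]
    exact ⟨fun ⟨hSW, hS⟩ => ⟨hS, hSW, existsUnique_insert_subset hSW (by lia)⟩,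
      fun ⟨hS, hSW, _⟩ => ⟨hSW, hS⟩⟩
  | subdivide F T v hF hT hv ih =>
    change S ∈ subdivision F T v ↔ _ ∧ IsFaceClique (subdivision F T v) S ∧
      ∃! u, IsApex (subdivision F T v) S u
    have hTn := hF.card_of_mem hT
    have hT3 : 3 ≤ #T := by lia
    by_cases hvS : v ∈ S
    · rw [mem_subdivision_iff_of_mem hT hT3 hv hvS, hTn]
    rw [mem_subdivision (hv T hT), isFaceClique_subdivision_of_notMem hT hT3 hv hvS]
    obtain rfl | hST := eq_or_ne S T
    · have hapex := (ih.1 hT).2.2.exists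
      simp [hvS, not_existsUnique_isApex_subdivision hT hT3 hv hapex]
    · simp only [hST, hvS, ih, ne_eq, not_false_eq_true, and_true, false_and, or_false]
      refine and_congr_right fun hS => and_congr_right fun _ => existsUnique_congr fun u => ?_
      exact (isApex_subdivision_iff hT hT3 hv hvS hST (hS.trans hTn.symm)).symm

end IsStackedSphere

end Skeleton

section Staircase

open Finset

variable {α β : Type*} [DecidableEq β]

/-- A family of subsets `f x` of `Y`, indexed by `x ∈ X` with `#Y = #X + 1`, that is totally ordered
by inclusion and in which neither the sets above nor the sets below a given one are too numerous.
Equality is then forced throughout: drawn as the rows of a diagram, the sets form a staircase, each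
one an element longer than the next. -/
structure IsStaircase (X : Finset α) (Y : Finset β) (f : α → Finset β) : Prop where
  card_right : #Y = #X + 1
  subset : ∀ x ∈ X, f x ⊆ Y
  total : ∀ x ∈ X, ∀ x' ∈ X, f x ⊆ f x' ∨ f x' ⊆ f x
  upper_le : ∀ x ∈ X, #{x' ∈ X | f x ⊆ f x'} + #(f x) ≤ #Y
  lower_le : ∀ x ∈ X, #{x' ∈ X | f x' ⊆ f x} + #(Y \ f x) ≤ #Y

namespace IsStaircase

variable {X : Finset α} {Y : Finset β} {f : α → Finset β}

theorem card_upper_add_card_lower (h : IsStaircase X Y f) {x : α} (hx : x ∈ X) :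
    #{x' ∈ X | f x ⊆ f x'} + #{x' ∈ X | f x' ⊆ f x} = #X + #{x' ∈ X | f x' = f x} := by
  classical
  have hunion : {x' ∈ X | f x ⊆ f x'} ∪ {x' ∈ X | f x' ⊆ f x} = X := by
    rw [← filter_or, filter_eq_self]
    exact h.total x hx
  have hinter : {x' ∈ X | f x ⊆ f x'} ∩ {x' ∈ X | f x' ⊆ f x} = {x' ∈ X | f x' = f x} := by
    rw [← filter_and]
    exact filter_congr fun x' _ => by rw [subset_antisymm_iff, and_comm]
  rw [← card_union_add_card_inter, hunion, hinter]

theorem card_filter_eq_le_one (h : IsStaircase X Y f) {x : α} (hx : x ∈ X) :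
    #{x' ∈ X | f x' = f x} ≤ 1 := by
  have hsum := h.card_upper_add_card_lower hx
  have hcompl := card_sdiff_add_card_eq_card (h.subset x hx)
  have := h.card_right
  have := h.upper_le x hx
  have := h.lower_le x hx
  lia

theorem card_upper_add_card (h : IsStaircase X Y f) {x : α} (hx : x ∈ X) :
    #{x' ∈ X | f x ⊆ f x'} + #(f x) = #Y := by
  have hself : 0 < #{x' ∈ X | f x' = f x} := card_pos.2 ⟨x, by simp [hx]⟩
  have hsum := h.card_upper_add_card_lower hx
  have hcompl := card_sdiff_add_card_eq_card (h.subset x hx)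
  have := h.card_right
  have := h.upper_le x hx
  have := h.lower_le x hx
  lia

theorem card_pos (h : IsStaircase X Y f) {x : α} (hx : x ∈ X) : 0 < #(f x) := by
  have hcard := h.card_upper_add_card hx
  have hle : #{x' ∈ X | f x ⊆ f x'} ≤ #X := card_filter_le _ _
  have := h.card_right
  lia

theorem card_le (h : IsStaircase X Y f) {x : α} (hx : x ∈ X) : #(f x) ≤ #X := by
  have hself : 0 < #{x' ∈ X | f x ⊆ f x'} := Finset.card_pos.2 ⟨x, by simp [hx]⟩
  have hcard := h.card_upper_add_card hx
  have := h.card_right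
  lia

theorem injOn_card (h : IsStaircase X Y f) : Set.InjOn (fun x => #(f x)) X := by
  intro x hx x' hx' hcard
  have heq : f x' = f x := by
    rcases h.total x hx x' hx' with hsub | hsub
    · exact (eq_of_subset_of_card_le hsub hcard.ge).symm
    · exact eq_of_subset_of_card_le hsub hcard.le
  exact card_le_one.1 (h.card_filter_eq_le_one hx) x (by simpa using hx) x'
    (mem_filter.2 ⟨hx', heq⟩)

theorem mem_iff (h : IsStaircase X Y f) {x : α} (hx : x ∈ X) {w : β} :
    w ∈ f x ↔ #Y ≤ #(f x) + #{x' ∈ X | w ∈ f x'} := by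
  rw [← h.card_upper_add_card hx]
  constructor
  · intro hw
    have hle : #{x' ∈ X | f x ⊆ f x'} ≤ #{x' ∈ X | w ∈ f x'} :=
      card_le_card (monotone_filter_right X fun x' _ hsub => hsub hw)
    lia
  · contrapose!
    intro hw
    have hlt : #{x' ∈ X | w ∈ f x'} < #{x' ∈ X | f x ⊆ f x'} := by
      refine card_lt_card (ssubset_of_subset_not_subset (fun x' hx' => ?_) fun hsub => ?_)
      · obtain ⟨hx'X, hwx'⟩ := mem_filter.1 hx'
        exact mem_filter.2 ⟨hx'X, (h.total x hx x' hx'X).resolve_right fun hsub => hw (hsub hwx')⟩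
      · exact hw (mem_filter.1 (hsub (mem_filter.2 ⟨hx, Subset.rfl⟩))).2
    lia

theorem exists_card_eq (h : IsStaircase X Y f) {c : ℕ} (hc : 0 < c) (hcX : c ≤ #X) :
    ∃ x ∈ X, #(f x) = c :=
  surjOn_of_injOn_of_card_le (t := Icc 1 #X) _
    (fun _ hx => mem_coe.2 (mem_Icc.2 ⟨h.card_pos hx, h.card_le hx⟩)) h.injOn_card (by simp)
    (mem_coe.2 (mem_Icc.2 ⟨hc, hcX⟩))

theorem card_filter_le_card (h : IsStaircase X Y f) {c : ℕ} (hc : c ≤ #Y) :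
    #{w ∈ Y | c ≤ #{x ∈ X | w ∈ f x}} = #Y - c := by
  have hY := h.card_right
  obtain rfl | hc0 := c.eq_zero_or_pos
  · simp
  obtain rfl | hcY := hc.eq_or_lt
  · rw [Nat.sub_self, card_eq_zero, filter_eq_empty_iff]
    intro w _
    have hle : #{x ∈ X | w ∈ f x} ≤ #X := card_filter_le _ _
    lia
  obtain ⟨x, hx, hxc⟩ := h.exists_card_eq (c := #Y - c) (by lia) (by lia)
  have hfilter : {w ∈ Y | c ≤ #{x' ∈ X | w ∈ f x'}} = f x := by
    ext w
    have hmem := h.mem_iff hx (w := w)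
    rw [mem_filter]
    exact ⟨fun hw => hmem.2 (by lia), fun hw => ⟨h.subset x hx hw, by have := hmem.1 hw; lia⟩⟩
  rw [hfilter, hxc]

theorem injOn_card_filter (h : IsStaircase X Y f) :
    Set.InjOn (fun w => #{x ∈ X | w ∈ f x}) Y := by
  intro w hw w' hw' hcard
  let c := #{x ∈ X | w ∈ f x}
  have hcX : c ≤ #X := card_filter_le _ _
  have hsub : {u ∈ Y | c + 1 ≤ #{x ∈ X | u ∈ f x}} ⊆ {u ∈ Y | c ≤ #{x ∈ X | u ∈ f x}} :=
    monotone_filter_right Y fun _ _ hu => (Nat.le_succ c).trans hu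
  have hlevel : #({u ∈ Y | c ≤ #{x ∈ X | u ∈ f x}} \ {u ∈ Y | c + 1 ≤ #{x ∈ X | u ∈ f x}}) = 1 := by
    have hY := h.card_right
    rw [card_sdiff_of_subset hsub, h.card_filter_le_card (by lia), h.card_filter_le_card (by lia)]
    lia
  have hmem {u : β} (hu : u ∈ Y) (huc : c = #{x ∈ X | u ∈ f x}) :
      u ∈ {u ∈ Y | c ≤ #{x ∈ X | u ∈ f x}} \ {u ∈ Y | c + 1 ≤ #{x ∈ X | u ∈ f x}} := by
    simp [hu, ← huc]
  exact card_le_one.1 hlevel.le w (hmem hw rfl) w' (hmem hw' hcard)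

end IsStaircase

end Staircase

section PathPower

open Finset

/-- A set of natural numbers is narrow if its members differ by at most `n`: it is a clique of the
`n`-th power of a path. -/
def IsNarrow (n : ℕ) (P : Finset ℕ) : Prop :=
  ∀ p ∈ P, ∀ r ∈ P, p ≤ r + n

/-- The analogue of `IsApex` for the `n`-th power of the path `0, …, N`. -/
def IsPathApex (n N : ℕ) (P : Finset ℕ) (p : ℕ) : Prop :=
  p ≤ N ∧ p ∉ P ∧ IsNarrow n (insert p P)

variable {n N : ℕ} {P : Finset ℕ}

theorem IsNarrow.mono {Q : Finset ℕ} (h : IsNarrow n Q) (hPQ : P ⊆ Q) : IsNarrow n P :=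
  fun p hp r hr => h p (hPQ hp) r (hPQ hr)

theorem isNarrow_Icc (n a : ℕ) : IsNarrow n (Icc a (a + n)) := by
  intro p hp r hr
  rw [mem_Icc] at hp hr
  lia

theorem isPathApex_Ico {a p : ℕ} (hn : 1 ≤ n) (hpN : p ≤ N) (hp : p + 1 = a ∨ p = a + n) :
    IsPathApex n N (Ico a (a + n)) p := by
  have hsub : insert p (Ico a (a + n)) ⊆ Icc (min p a) (min p a + n) := by
    intro r hr
    rw [mem_insert, mem_Ico] at hr
    rw [mem_Icc]
    lia
  exact ⟨hpN, by rw [mem_Ico]; lia, (isNarrow_Icc n _).mono hsub⟩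

theorem eq_Ico_or_eq_erase_of_isNarrow (hn : 1 ≤ n) (hcard : #P = n) (hP : IsNarrow n P) :
    ∃ a ∈ P, P = Ico a (a + n) ∨ ∃ c, a < c ∧ c < a + n ∧ P = (Icc a (a + n)).erase c := by
  have hne : P.Nonempty := card_pos.1 (by lia)
  let a := P.min' hne
  have ha : a ∈ P := P.min'_mem hne
  have hsub : P ⊆ Icc a (a + n) := fun p hp => mem_Icc.2 ⟨P.min'_le p hp, hP p hp a ha⟩
  obtain ⟨c, hc, hins⟩ := exists_eq_insert_iff.2 ⟨hsub, by simp [hcard]; lia⟩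
  have hPc : P = (Icc a (a + n)).erase c := by rw [← hins, erase_insert hc]
  have hcI : c ∈ Icc a (a + n) := by simp [← hins]
  have hac : a ≠ c := ne_of_mem_of_not_mem ha hc
  rw [mem_Icc] at hcI
  refine ⟨a, ha, ?_⟩
  obtain hlt | rfl := hcI.2.lt_or_eq
  · exact Or.inr ⟨c, by lia, hlt, hPc⟩
  · exact Or.inl (by rw [hPc, Icc_erase_right])

theorem eq_end_or_eq_erase_of_existsUnique_isPathApex (hn : 1 ≤ n) (hPN : ∀ p ∈ P, p ≤ N)
    (hcard : #P = n) (hP : IsNarrow n P) (hapex : ∃! p, IsPathApex n N P p) :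
    P = range n ∨ P = Icc (N + 1 - n) N ∨
      ∃ a c, a + n ≤ N ∧ a < c ∧ c < a + n ∧ P = (Icc a (a + n)).erase c := by
  obtain ⟨a, -, rfl | ⟨c, hac, hca, rfl⟩⟩ := eq_Ico_or_eq_erase_of_isNarrow hn hcard hP
  · have hlast : a + n - 1 ≤ N := hPN _ (by rw [mem_Ico]; lia)
    obtain rfl | ha := a.eq_zero_or_pos
    · exact Or.inl (by rw [zero_add, range_eq_Ico])
    obtain haN | haN := le_or_gt (a + n) N
    · have := hapex.unique (isPathApex_Ico hn (p := a - 1) (by lia) (by lia))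
        (isPathApex_Ico hn haN (Or.inr rfl))
      lia
    · refine Or.inr (Or.inl (ext fun p => ?_))
      rw [mem_Ico, mem_Icc]
      lia
  · exact Or.inr (Or.inr ⟨a, c, hPN _ (by simp; lia), hac, hca, rfl⟩)

theorem existsUnique_isPathApex_erase {a c : ℕ} (haN : a + n ≤ N) (hac : a < c)
    (hca : c < a + n) : ∃! p, IsPathApex n N ((Icc a (a + n)).erase c) p := by
  refine ⟨c, ⟨by lia, notMem_erase _ _, ?_⟩, fun p ⟨_, hp, hnarrow⟩ => ?_⟩
  · rw [insert_erase (by rw [mem_Icc]; lia)]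
    exact isNarrow_Icc n a
  · have hleft : a ∈ (Icc a (a + n)).erase c := by simp [hac.ne]
    have hright : a + n ∈ (Icc a (a + n)).erase c := by simp [hca.ne']
    have hpa := hnarrow p (mem_insert_self _ _) a (mem_insert_of_mem hleft)
    have hap := hnarrow (a + n) (mem_insert_of_mem hright) p (mem_insert_self _ _)
    by_contra hpc
    exact hp (mem_erase.2 ⟨hpc, mem_Icc.2 ⟨by lia, hpa⟩⟩)

end PathPower

section PathLayout

open Finset

variable {V : Type*} [DecidableEq V]

/-- A path layout numbers the vertices of `F` by `0, …, N` in such a way that the 1-skeleton becomes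
the `n`-th power of a path. -/
structure IsPathLayout (n N : ℕ) (F : Finset (Finset V)) (pos : V → ℕ) : Prop where
  bijOn : Set.BijOn pos ↑(F.biUnion id) (Set.Iic N)
  cofacial_iff : ∀ u ∈ F.biUnion id, ∀ w ∈ F.biUnion id,
    (Cofacial F u w ↔ pos u ≤ pos w + n ∧ pos w ≤ pos u + n)

namespace IsPathLayout

variable {n N : ℕ} {F : Finset (Finset V)} {pos : V → ℕ} {S : Finset V}

theorem isFaceClique_iff (h : IsPathLayout n N F pos) (hS : S ⊆ F.biUnion id) :
    IsFaceClique F S ↔ IsNarrow n (S.image pos) := by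
  simp only [IsNarrow, forall_mem_image]
  constructor
  · exact fun hclique u hu w hw => ((h.cofacial_iff u (hS hu) w (hS hw)).1 (hclique u hu w hw)).1
  · exact fun hnarrow u hu w hw =>
      (h.cofacial_iff u (hS hu) w (hS hw)).2 ⟨hnarrow hu hw, hnarrow hw hu⟩

theorem isApex_iff (h : IsPathLayout n N F pos) (hS : S ⊆ F.biUnion id) {u : V}
    (hu : u ∈ F.biUnion id) : IsApex F S u ↔ IsPathApex n N (S.image pos) (pos u) := by
  have hmem : pos u ∈ S.image pos ↔ u ∈ S := by
    rw [← mem_coe, coe_image, h.bijOn.injOn.mem_image_iff (coe_subset.2 hS) hu, mem_coe]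
  rw [IsApex, IsPathApex, h.isFaceClique_iff (insert_subset hu hS), image_insert, hmem,
    and_iff_right (Set.mem_Iic.1 (h.bijOn.mapsTo hu))]

theorem existsUnique_isApex_iff (h : IsPathLayout n N F pos) (hS : S ⊆ F.biUnion id) :
    (∃! u, IsApex F S u) ↔ ∃! p, IsPathApex n N (S.image pos) p := by
  have hvertex {u : V} (hu : IsApex F S u) : u ∈ F.biUnion id :=
    hu.2.subset_biUnion (mem_insert_self u S)
  constructor
  · rintro ⟨u, hu, huniq⟩
    refine ⟨pos u, (h.isApex_iff hS (hvertex hu)).1 hu, fun p hp => ?_⟩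
    obtain ⟨w, hw, rfl⟩ := h.bijOn.surjOn hp.1
    rw [huniq w ((h.isApex_iff hS hw).2 hp)]
  · rintro ⟨p, hp, huniq⟩
    obtain ⟨u, hu, rfl⟩ := h.bijOn.surjOn hp.1
    refine ⟨u, (h.isApex_iff hS hu).2 hp, fun w hw => ?_⟩
    exact h.bijOn.injOn (hvertex hw) hu (huniq _ ((h.isApex_iff hS (hvertex hw)).1 hw))

theorem image_eq_image_iff (h : IsPathLayout n N F pos) {T : Finset V}
    (hS : S ⊆ F.biUnion id) (hT : T ⊆ F.biUnion id) : S.image pos = T.image pos ↔ S = T :=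
  (image_injOn_powerset_of_injOn h.bijOn.injOn).eq_iff (mem_coe.2 (mem_powerset.2 hS))
    (mem_coe.2 (mem_powerset.2 hT))

theorem exists_image_eq (h : IsPathLayout n N F pos) {P : Finset ℕ} (hP : ∀ p ∈ P, p ≤ N) :
    ∃ S ⊆ F.biUnion id, S.image pos = P :=
  subset_image_iff.1 fun p hp => mem_image.2 (h.bijOn.surjOn (hP p hp))

theorem mem_of_image_eq_erase (h : IsPathLayout n N F pos) (hF : IsStackedSphere n F) (hn : 3 ≤ n)
    (hS : S ⊆ F.biUnion id) {a c : ℕ} (haN : a + n ≤ N) (hac : a < c) (hca : c < a + n)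
    (himage : S.image pos = (Icc a (a + n)).erase c) : S ∈ F := by
  have hcard : #S = n := by
    rw [← card_image_of_injOn (h.bijOn.injOn.mono (coe_subset.2 hS)), himage,
      card_erase_of_mem (by rw [mem_Icc]; lia), Nat.card_Icc]
    lia
  rw [hF.mem_iff hn, h.isFaceClique_iff hS, h.existsUnique_isApex_iff hS, himage]
  exact ⟨hcard, (isNarrow_Icc n a).mono (erase_subset _ _),
    existsUnique_isPathApex_erase haN hac hca⟩

theorem mem_and_ne_ends_iff (h : IsPathLayout n N F pos) (hF : IsStackedSphere n F) (hn : 3 ≤ n)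
    {F1 F2 : Finset V} (hF1 : F1 ∈ F) (hF2 : F2 ∈ F)
    (hlast : F1.image pos = Icc (N + 1 - n) N) (hfirst : F2.image pos = range n) :
    S ∈ F ∧ S ≠ F1 ∧ S ≠ F2 ↔ S ⊆ F.biUnion id ∧
      ∃ a c, a + n ≤ N ∧ a < c ∧ c < a + n ∧ S.image pos = (Icc a (a + n)).erase c := by
  have hvertices {T : Finset V} (hT : T ∈ F) : T ⊆ F.biUnion id := subset_biUnion_of_mem id hT
  constructor
  · rintro ⟨hSF, hS1, hS2⟩
    have hS := hvertices hSF
    obtain ⟨hcard, hclique, hapex⟩ := (hF.mem_iff hn).1 hSF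
    have hends := eq_end_or_eq_erase_of_existsUnique_isPathApex (by lia)
      (fun p hp => by
        obtain ⟨u, hu, rfl⟩ := mem_image.1 hp
        exact h.bijOn.mapsTo (hS hu))
      (by rw [card_image_of_injOn (h.bijOn.injOn.mono (coe_subset.2 hS)), hcard])
      ((h.isFaceClique_iff hS).1 hclique) ((h.existsUnique_isApex_iff hS).1 hapex)
    rw [← hfirst, ← hlast, h.image_eq_image_iff hS (hvertices hF2),
      h.image_eq_image_iff hS (hvertices hF1)] at hends
    exact ⟨hS, (hends.resolve_left hS2).resolve_left hS1⟩
  · rintro ⟨hS, a, c, haN, hac, hca, himage⟩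
    have hleft : a ∈ S.image pos := by simp [himage, hac.ne]
    have hright : a + n ∈ S.image pos := by simp [himage, hca.ne']
    refine ⟨h.mem_of_image_eq_erase hF hn hS haN hac hca himage, ?_, ?_⟩
    · rintro rfl
      rw [hlast, mem_Icc] at hleft hright
      lia
    · rintro rfl
      rw [hfirst, mem_range] at hleft hright
      lia

end IsPathLayout

end PathLayout

section Gluing

open Finset

variable {V : Type*}

/-- The data of an identification of two facets: `q` glues the facet `F2` to the facet `F1` along
the bijection `φ`. Admissibility is the condition that `x` and `φ x` have distance at least 3 in the
1-skeleton, expressed here as the absence of common neighbours. -/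
structure IsAdmissibleGluing (F : Finset (Finset V)) (F1 F2 : Finset V) (φ q : V → V) : Prop where
  left_mem : F1 ∈ F
  right_mem : F2 ∈ F
  bijOn : Set.BijOn φ F1 F2
  not_cofacial_of_cofacial : ∀ x ∈ F1, ∀ z, Cofacial F x z → ¬ Cofacial F z (φ x)
  fix : ∀ w, w ∉ F2 → q w = w
  fold : ∀ x ∈ F1, q (φ x) = x

namespace IsAdmissibleGluing

variable {F : Finset (Finset V)} {F1 F2 : Finset V} {φ q : V → V} {a b c x y : V}

theorem map_mem (h : IsAdmissibleGluing F F1 F2 φ q) (hx : x ∈ F1) : φ x ∈ F2 :=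
  h.bijOn.mapsTo hx

theorem not_cofacial (h : IsAdmissibleGluing F F1 F2 φ q) (hx : x ∈ F1) (hy : y ∈ F2) :
    ¬ Cofacial F x y :=
  fun hxy => h.not_cofacial_of_cofacial x hx y hxy ⟨F2, h.right_mem, hy, h.map_mem hx⟩

theorem notMem_right (h : IsAdmissibleGluing F F1 F2 φ q) (hx : x ∈ F1) : x ∉ F2 :=
  fun hx2 => h.not_cofacial hx hx2 ⟨F1, h.left_mem, hx, hx⟩

theorem disjoint (h : IsAdmissibleGluing F F1 F2 φ q) : Disjoint F1 F2 :=
  disjoint_left.2 fun _ => h.notMem_right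

theorem exists_eq_map (h : IsAdmissibleGluing F F1 F2 φ q) (hy : y ∈ F2) : ∃ x ∈ F1, φ x = y :=
  h.bijOn.surjOn hy

theorem eq_or_eq_map (h : IsAdmissibleGluing F F1 F2 φ q) (hab : q a = b) :
    a = b ∨ b ∈ F1 ∧ a = φ b := by
  by_cases ha : a ∈ F2
  · obtain ⟨x, hx, rfl⟩ := h.exists_eq_map ha
    obtain rfl : x = b := by rw [← hab, h.fold x hx]
    exact Or.inr ⟨hx, rfl⟩
  · exact Or.inl (by rw [← hab, h.fix a ha])

theorem eq_or_eq_map_of_map_eq (h : IsAdmissibleGluing F F1 F2 φ q) (hac : q a = q c) :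
    a = c ∨ a ∈ F1 ∧ c = φ a ∨ c ∈ F1 ∧ a = φ c := by
  have ha := h.eq_or_eq_map hac
  have hc := h.eq_or_eq_map (a := c) rfl
  generalize q c = b at ha hc
  obtain rfl | ⟨hb, rfl⟩ := ha <;> obtain rfl | ⟨hb', rfl⟩ := hc
  · exact Or.inl rfl
  · exact Or.inr (Or.inl ⟨hb', rfl⟩)
  · exact Or.inr (Or.inr ⟨hb, rfl⟩)
  · exact Or.inl rfl

theorem eq_of_cofacial (h : IsAdmissibleGluing F F1 F2 φ q) (hab : Cofacial F a b)
    (hcb : Cofacial F c b) (hac : q a = q c) : a = c := by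
  obtain hac | ⟨ha, rfl⟩ | ⟨hc, rfl⟩ := h.eq_or_eq_map_of_map_eq hac
  · exact hac
  · exact absurd hcb.symm (h.not_cofacial_of_cofacial a ha b hab)
  · exact absurd hab.symm (h.not_cofacial_of_cofacial c hc b hcb)

end IsAdmissibleGluing

variable [DecidableEq V]

/-- The vertices of `F` away from the two facets that are glued. -/
def middle (F : Finset (Finset V)) (F1 F2 : Finset V) : Finset V :=
  F.biUnion id \ (F1 ∪ F2)

/-- The vertices in the middle that are adjacent to `x`. -/
def middleNeighbors (F : Finset (Finset V)) (F1 F2 : Finset V) (x : V) : Finset V :=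
  {w ∈ middle F F1 F2 | Cofacial F x w}

/-- The position of a vertex in the path layout: the vertices of `F2`, of the middle and of `F1`
take the positions `0, …, n - 1`, then `n, …, 2n`, then `2n + 1, …, 3n`. A vertex of `F1` and its
partner in `F2` stand the further to the left the more neighbors the former has in the middle. -/
def position (n : ℕ) (F : Finset (Finset V)) (F1 F2 : Finset V) (q : V → V) (u : V) : ℕ :=
  if u ∈ F2 then n - #(middleNeighbors F F1 F2 (q u))
  else if u ∈ F1 then 3 * n + 1 - #(middleNeighbors F F1 F2 u)
  else n + #{x ∈ F1 | u ∈ middleNeighbors F F1 F2 x}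

variable {n : ℕ} {F : Finset (Finset V)} {F1 F2 : Finset V} {φ q : V → V} {u w x : V}

theorem mem_middle :
    w ∈ middle F F1 F2 ↔ w ∈ F.biUnion id ∧ w ∉ F1 ∧ w ∉ F2 := by
  rw [middle, mem_sdiff, mem_union, not_or]

theorem mem_middleNeighbors :
    w ∈ middleNeighbors F F1 F2 x ↔ w ∈ middle F F1 F2 ∧ Cofacial F x w :=
  mem_filter

namespace IsAdmissibleGluing

theorem left_subset (h : IsAdmissibleGluing F F1 F2 φ q) : F1 ⊆ F.biUnion id :=
  subset_biUnion_of_mem id h.left_mem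

theorem right_subset (h : IsAdmissibleGluing F F1 F2 φ q) : F2 ⊆ F.biUnion id :=
  subset_biUnion_of_mem id h.right_mem

theorem map_mem_sdiff (h : IsAdmissibleGluing F F1 F2 φ q) (hu : u ∈ F.biUnion id) :
    q u ∈ F.biUnion id \ F2 := by
  by_cases hu2 : u ∈ F2
  · obtain ⟨x, hx, rfl⟩ := h.exists_eq_map hu2
    rw [h.fold x hx]
    exact mem_sdiff.2 ⟨h.left_subset hx, h.notMem_right hx⟩
  · rw [h.fix u hu2]
    exact mem_sdiff.2 ⟨hu, hu2⟩

theorem injOn_prodMap (h : IsAdmissibleGluing F F1 F2 φ q) :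
    Set.InjOn (Prod.map q q) ↑(cofacialPairs F \ F2 ×ˢ F2) := by
  rintro ⟨a, b⟩ hab ⟨c, d⟩ hcd heq
  rw [mem_coe, mem_sdiff, mem_cofacialPairs, mem_product] at hab hcd
  obtain ⟨hac, hbd⟩ := Prod.mk.inj heq
  suffices a = c ∨ b = d by
    obtain rfl | rfl := this
    · rw [h.eq_of_cofacial hab.1.symm hcd.1.symm hbd]
    · rw [h.eq_of_cofacial hab.1 hcd.1 hac]
  obtain hac | ⟨ha, rfl⟩ | ⟨hc, rfl⟩ := h.eq_or_eq_map_of_map_eq hac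
  · exact Or.inl hac
  all_goals obtain hbd | ⟨hb, rfl⟩ | ⟨hd, rfl⟩ := h.eq_or_eq_map_of_map_eq hbd
  · exact Or.inr hbd
  · exact absurd ⟨h.map_mem ha, h.map_mem hb⟩ hcd.2
  · exact absurd hab.1 (h.not_cofacial ha (h.map_mem hd))
  · exact Or.inr hbd
  · exact absurd hab.1.symm (h.not_cofacial hb (h.map_mem hc))
  · exact absurd ⟨h.map_mem hc, h.map_mem hd⟩ hab.2

section Counting

variable (h : IsAdmissibleGluing F F1 F2 φ q) (hF : IsStackedSphere n F) (hn : 3 ≤ n)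
  (hcard : #(F.biUnion id) = 3 * n + 1)

include h hF hcard in
theorem card_middle : #(middle F F1 F2) = n + 1 := by
  rw [middle, card_sdiff_of_subset (union_subset h.left_subset h.right_subset),
    card_union_of_disjoint h.disjoint,
    hF.card_of_mem h.left_mem, hF.card_of_mem h.right_mem, hcard]
  lia

include h hF hn hcard

theorem card_cofacialPairs_sdiff :
    #(cofacialPairs F \ F2 ×ˢ F2) = #((F.biUnion id \ F2) ×ˢ (F.biUnion id \ F2)) := by
  have hF2 : F2 ×ˢ F2 ⊆ cofacialPairs F := fun p hp =>
    mem_cofacialPairs.2 ⟨F2, h.right_mem, mem_product.1 hp⟩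
  have hverts : #(F.biUnion id \ F2) = 2 * n + 1 := by
    rw [card_sdiff_of_subset h.right_subset, hcard,
      hF.card_of_mem h.right_mem]
    lia
  have hsplit := card_sdiff_add_card_eq_card hF2
  have hpairs := hF.card_cofacialPairs hn
  rw [card_product, hF.card_of_mem h.right_mem] at hsplit
  rw [hcard, ← hsplit] at hpairs
  rw [card_product, hverts]
  linarith

theorem exists_cofacial_map_eq (hu : u ∈ F.biUnion id \ F2) (hw : w ∈ F.biUnion id \ F2) :
    ∃ a b, Cofacial F a b ∧ q a = u ∧ q b = w := by
  have hmaps : Set.MapsTo (Prod.map q q) ↑(cofacialPairs F \ F2 ×ˢ F2)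
      ↑((F.biUnion id \ F2) ×ˢ (F.biUnion id \ F2)) := by
    rintro ⟨a, b⟩ hab
    have hcof := mem_cofacialPairs.1 (mem_sdiff.1 hab).1
    exact mem_coe.2 (mem_product.2
      ⟨h.map_mem_sdiff hcof.left_mem, h.map_mem_sdiff hcof.symm.left_mem⟩)
  have hsurj := surjOn_of_injOn_of_card_le _ hmaps h.injOn_prodMap
    (h.card_cofacialPairs_sdiff hF hn hcard).ge
  obtain ⟨⟨a, b⟩, hab, heq⟩ := hsurj (mem_coe.2 (mk_mem_product hu hw))
  exact ⟨a, b, mem_cofacialPairs.1 (mem_sdiff.1 hab).1, Prod.mk.inj heq⟩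

theorem isFaceClique_middle : IsFaceClique F (middle F F1 F2) := by
  intro u hu w hw
  rw [mem_middle] at hu hw
  obtain ⟨a, b, hab, ha, hb⟩ := h.exists_cofacial_map_eq hF hn hcard
    (mem_sdiff.2 ⟨hu.1, hu.2.2⟩) (mem_sdiff.2 ⟨hw.1, hw.2.2⟩)
  obtain rfl := (h.eq_or_eq_map ha).resolve_right fun hu1 => hu.2.1 hu1.1
  obtain rfl := (h.eq_or_eq_map hb).resolve_right fun hw1 => hw.2.1 hw1.1
  exact hab

theorem cofacial_map_iff (hx : x ∈ F1) (hw : w ∈ middle F F1 F2) :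
    Cofacial F (φ x) w ↔ ¬ Cofacial F x w := by
  refine ⟨fun hφw hxw => h.not_cofacial_of_cofacial x hx w hxw hφw.symm, fun hxw => ?_⟩
  rw [mem_middle] at hw
  obtain ⟨a, b, hab, ha, hb⟩ := h.exists_cofacial_map_eq hF hn hcard
    (mem_sdiff.2 ⟨h.left_subset hx, h.notMem_right hx⟩)
    (mem_sdiff.2 ⟨hw.1, hw.2.2⟩)
  obtain rfl := (h.eq_or_eq_map hb).resolve_right fun hw1 => hw.2.1 hw1.1
  obtain rfl | ⟨-, rfl⟩ := h.eq_or_eq_map ha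
  · exact absurd hab hxw
  · exact hab

theorem middleNeighbors_total {x' : V} (hx : x ∈ F1) (hx' : x' ∈ F1) :
    middleNeighbors F F1 F2 x ⊆ middleNeighbors F F1 F2 x' ∨
      middleNeighbors F F1 F2 x' ⊆ middleNeighbors F F1 F2 x := by
  simp only [subset_iff, mem_middleNeighbors]
  by_contra! hcross
  obtain ⟨⟨w, ⟨hw, hxw⟩, hx'w⟩, w', ⟨hw', hx'w'⟩, hxw'⟩ := hcross
  obtain hdiag | hdiag := hF.noInducedFourCycle hn hxw
    (h.isFaceClique_middle hF hn hcard w hw w' hw') hx'w'.symm ⟨F1, h.left_mem, hx', hx⟩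
  · exact hxw' hw' hdiag
  · exact hx'w hw hdiag.symm

theorem card_upper_add_card_middleNeighbors_le (x : V) :
    #{x' ∈ F1 | middleNeighbors F F1 F2 x ⊆ middleNeighbors F F1 F2 x'} +
      #(middleNeighbors F F1 F2 x) ≤ n + 1 := by
  have hclique : IsFaceClique F
      ({x' ∈ F1 | middleNeighbors F F1 F2 x ⊆ middleNeighbors F F1 F2 x'} ∪
        middleNeighbors F F1 F2 x) := by
    refine ((isFaceClique_of_mem h.left_mem).mono (filter_subset _ _)).union
      ((h.isFaceClique_middle hF hn hcard).mono (filter_subset _ _)) fun x' hx' w hw => ?_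
    exact (mem_middleNeighbors.1 ((mem_filter.1 hx').2 hw)).2
  rw [← card_union_of_disjoint]
  · exact hF.card_le_of_isFaceClique hn hclique
  · rw [disjoint_left]
    exact fun w hw1 hw => (mem_middle.1 (mem_middleNeighbors.1 hw).1).2.1 (mem_filter.1 hw1).1

theorem card_lower_add_card_sdiff_middleNeighbors_le (x : V) :
    #{x' ∈ F1 | middleNeighbors F F1 F2 x' ⊆ middleNeighbors F F1 F2 x} +
      #(middle F F1 F2 \ middleNeighbors F F1 F2 x) ≤ n + 1 := by
  let lower := {x' ∈ F1 | middleNeighbors F F1 F2 x' ⊆ middleNeighbors F F1 F2 x}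
  have himage : lower.image φ ⊆ F2 := by
    refine image_subset_iff.2 fun x' hx' => h.map_mem (mem_filter.1 hx').1
  have hclique : IsFaceClique F
      (lower.image φ ∪ middle F F1 F2 \ middleNeighbors F F1 F2 x) := by
    refine ((isFaceClique_of_mem h.right_mem).mono himage).union
      ((h.isFaceClique_middle hF hn hcard).mono sdiff_subset) (forall_mem_image.2 ?_)
    intro x' hx' w hw
    obtain ⟨hx'1, hsub⟩ := mem_filter.1 hx'
    obtain ⟨hw, hxw⟩ := mem_sdiff.1 hw
    exact (h.cofacial_map_iff hF hn hcard hx'1 hw).2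
      fun hx'w => hxw (hsub (mem_middleNeighbors.2 ⟨hw, hx'w⟩))
  have hinj : Set.InjOn φ lower := h.bijOn.injOn.mono (coe_subset.2 (filter_subset _ _))
  rw [← card_image_of_injOn hinj, ← card_union_of_disjoint]
  · exact hF.card_le_of_isFaceClique hn hclique
  · rw [disjoint_left]
    exact fun w hw1 hw => (mem_middle.1 (mem_sdiff.1 hw).1).2.2 (himage hw1)

theorem isStaircase : IsStaircase F1 (middle F F1 F2) (middleNeighbors F F1 F2) where
  card_right := by rw [h.card_middle hF hcard, hF.card_of_mem h.left_mem]
  subset _ _ := filter_subset _ _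
  total _ hx _ hx' := h.middleNeighbors_total hF hn hcard hx hx'
  upper_le x _ := by
    rw [h.card_middle hF hcard]
    exact h.card_upper_add_card_middleNeighbors_le hF hn hcard x
  lower_le x _ := by
    rw [h.card_middle hF hcard]
    exact h.card_lower_add_card_sdiff_middleNeighbors_le hF hn hcard x

omit hF hn hcard in
theorem vertex_cases (hu : u ∈ F.biUnion id) :
    u ∈ F1 ∨ (∃ x ∈ F1, φ x = u) ∨ u ∈ middle F F1 F2 := by
  by_cases hu1 : u ∈ F1
  · exact Or.inl hu1
  by_cases hu2 : u ∈ F2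
  · exact Or.inr (Or.inl (h.exists_eq_map hu2))
  · exact Or.inr (Or.inr (mem_middle.2 ⟨hu, hu1, hu2⟩))

omit hF hn hcard in
theorem position_left (hx : x ∈ F1) :
    position n F F1 F2 q x = 3 * n + 1 - #(middleNeighbors F F1 F2 x) := by
  rw [position, if_neg (h.notMem_right hx), if_pos hx]

omit hF hn hcard in
theorem position_map (hx : x ∈ F1) :
    position n F F1 F2 q (φ x) = n - #(middleNeighbors F F1 F2 x) := by
  rw [position, if_pos (h.map_mem hx), h.fold x hx]

omit h hF hn hcard in
theorem position_middle (hw : w ∈ middle F F1 F2) :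
    position n F F1 F2 q w = n + #{x ∈ F1 | w ∈ middleNeighbors F F1 F2 x} := by
  rw [position, if_neg (mem_middle.1 hw).2.2, if_neg (mem_middle.1 hw).2.1]

theorem card_middleNeighbors_mem_Icc (hx : x ∈ F1) :
    #(middleNeighbors F F1 F2 x) ∈ Icc 1 n := by
  have hstair := h.isStaircase hF hn hcard
  have hle := hstair.card_le hx
  rw [hF.card_of_mem h.left_mem] at hle
  exact mem_Icc.2 ⟨hstair.card_pos hx, hle⟩

theorem position_left_mem_Icc (hx : x ∈ F1) :
    position n F F1 F2 q x ∈ Icc (2 * n + 1) (3 * n) := by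
  have hdeg := mem_Icc.1 (h.card_middleNeighbors_mem_Icc hF hn hcard hx)
  rw [h.position_left hx, mem_Icc]
  lia

theorem position_map_lt (hx : x ∈ F1) : position n F F1 F2 q (φ x) < n := by
  have hdeg := mem_Icc.1 (h.card_middleNeighbors_mem_Icc hF hn hcard hx)
  rw [h.position_map hx]
  lia

omit hn hcard in
theorem position_middle_mem_Icc (hw : w ∈ middle F F1 F2) :
    position n F F1 F2 q w ∈ Icc n (2 * n) := by
  have hcodeg : #{x ∈ F1 | w ∈ middleNeighbors F F1 F2 x} ≤ #F1 := card_filter_le _ _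
  rw [hF.card_of_mem h.left_mem] at hcodeg
  rw [position_middle hw, mem_Icc]
  lia

theorem position_eq_position_map_add (hx : x ∈ F1) :
    position n F F1 F2 q x = position n F F1 F2 q (φ x) + (2 * n + 1) := by
  have hdeg := mem_Icc.1 (h.card_middleNeighbors_mem_Icc hF hn hcard hx)
  rw [h.position_left hx, h.position_map hx]
  lia

theorem cofacial_left_middle_iff (hx : x ∈ F1) (hw : w ∈ middle F F1 F2) :
    Cofacial F x w ↔ position n F F1 F2 q x ≤ position n F F1 F2 q w + n := by
  have hdeg := mem_Icc.1 (h.card_middleNeighbors_mem_Icc hF hn hcard hx)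
  have hmem := (h.isStaircase hF hn hcard).mem_iff hx (w := w)
  rw [mem_middleNeighbors, and_iff_right hw, h.card_middle hF hcard] at hmem
  rw [hmem, h.position_left hx, position_middle hw]
  lia

theorem cofacial_map_middle_iff (hx : x ∈ F1) (hw : w ∈ middle F F1 F2) :
    Cofacial F (φ x) w ↔ position n F F1 F2 q w ≤ position n F F1 F2 q (φ x) + n := by
  rw [h.cofacial_map_iff hF hn hcard hx hw, h.cofacial_left_middle_iff hF hn hcard hx hw,
    h.position_eq_position_map_add hF hn hcard hx]
  lia

theorem cofacial_iff_of_position_le (hu : u ∈ F.biUnion id) (hw : w ∈ F.biUnion id)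
    (huw : position n F F1 F2 q u ≤ position n F F1 F2 q w) :
    Cofacial F u w ↔ position n F F1 F2 q w ≤ position n F F1 F2 q u + n := by
  have hleft {x : V} (hx : x ∈ F1) := mem_Icc.1 (h.position_left_mem_Icc hF hn hcard hx)
  have hright {x : V} (hx : x ∈ F1) := h.position_map_lt hF hn hcard hx
  have hmiddle {w : V} (hw : w ∈ middle F F1 F2) := mem_Icc.1 (h.position_middle_mem_Icc hF hw)
  obtain hu | ⟨x, hx, rfl⟩ | hu := h.vertex_cases hu <;>
    obtain hw | ⟨y, hy, rfl⟩ | hw := h.vertex_cases hw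
  · exact iff_of_true ⟨F1, h.left_mem, hu, hw⟩ (by have := hleft hu; have := hleft hw; lia)
  · exact absurd huw (by have := hleft hu; have := hright hy; lia)
  · exact absurd huw (by have := hleft hu; have := hmiddle hw; lia)
  · exact iff_of_false (fun hxw => h.not_cofacial hw (h.map_mem hx) hxw.symm)
      (by have := hright hx; have := hleft hw; lia)
  · exact iff_of_true ⟨F2, h.right_mem, h.map_mem hx, h.map_mem hy⟩ (by have := hright hy; lia)
  · exact h.cofacial_map_middle_iff hF hn hcard hx hw
  · exact cofacial_comm.trans (h.cofacial_left_middle_iff hF hn hcard hw hu)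
  · exact absurd huw (by have := hmiddle hu; have := hright hy; lia)
  · exact iff_of_true (h.isFaceClique_middle hF hn hcard u hu w hw)
      (by have := hmiddle hu; have := hmiddle hw; lia)

theorem mapsTo_position :
    Set.MapsTo (position n F F1 F2 q) ↑(F.biUnion id) (Set.Iic (3 * n)) := by
  intro u hu
  rw [Set.mem_Iic]
  obtain hu | ⟨x, hx, rfl⟩ | hu := h.vertex_cases hu
  · exact (mem_Icc.1 (h.position_left_mem_Icc hF hn hcard hu)).2
  · have := h.position_map_lt hF hn hcard hx
    lia
  · have := mem_Icc.1 (h.position_middle_mem_Icc hF hu)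
    lia

theorem injOn_position_left : Set.InjOn (position n F F1 F2 q) F1 := by
  intro x hx y hy heq
  have hx' := mem_Icc.1 (h.card_middleNeighbors_mem_Icc hF hn hcard hx)
  have hy' := mem_Icc.1 (h.card_middleNeighbors_mem_Icc hF hn hcard hy)
  rw [h.position_left hx, h.position_left hy] at heq
  refine (h.isStaircase hF hn hcard).injOn_card hx hy ?_
  beta_reduce
  lia

theorem injOn_position_middle : Set.InjOn (position n F F1 F2 q) (middle F F1 F2) := by
  intro u hu w hw heq
  rw [position_middle hu, position_middle hw] at heq
  exact (h.isStaircase hF hn hcard).injOn_card_filter hu hw (Nat.add_left_cancel heq)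

theorem injOn_position : Set.InjOn (position n F F1 F2 q) ↑(F.biUnion id) := by
  have hleft {x : V} (hx : x ∈ F1) := mem_Icc.1 (h.position_left_mem_Icc hF hn hcard hx)
  have hright {x : V} (hx : x ∈ F1) := h.position_map_lt hF hn hcard hx
  have hmiddle {w : V} (hw : w ∈ middle F F1 F2) := mem_Icc.1 (h.position_middle_mem_Icc hF hw)
  intro u hu w hw heq
  obtain hu | ⟨x, hx, rfl⟩ | hu := h.vertex_cases hu <;>
    obtain hw | ⟨y, hy, rfl⟩ | hw := h.vertex_cases hw
  · exact h.injOn_position_left hF hn hcard hu hw heq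
  · exact absurd heq (by have := hleft hu; have := hright hy; lia)
  · exact absurd heq (by have := hleft hu; have := hmiddle hw; lia)
  · exact absurd heq (by have := hright hx; have := hleft hw; lia)
  · have hxy : position n F F1 F2 q x = position n F F1 F2 q y := by
      rw [h.position_eq_position_map_add hF hn hcard hx, heq,
        h.position_eq_position_map_add hF hn hcard hy]
    rw [h.injOn_position_left hF hn hcard hx hy hxy]
  · exact absurd heq (by have := hright hx; have := hmiddle hw; lia)
  · exact absurd heq (by have := hmiddle hu; have := hleft hw; lia)
  · exact absurd heq (by have := hmiddle hu; have := hright hy; lia)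
  · exact h.injOn_position_middle hF hn hcard hu hw heq

theorem isPathLayout_position : IsPathLayout n (3 * n) F (position n F F1 F2 q) where
  bijOn := by
    refine ⟨h.mapsTo_position hF hn hcard, h.injOn_position hF hn hcard, ?_⟩
    have hsurj := surjOn_of_injOn_of_card_le (t := Iic (3 * n)) _
      (by simpa using h.mapsTo_position hF hn hcard) (h.injOn_position hF hn hcard)
      (by rw [hcard, Nat.card_Iic])
    rwa [coe_Iic] at hsurj
  cofacial_iff u hu w hw := by
    obtain huw | hwu := le_total (position n F F1 F2 q u) (position n F F1 F2 q w)
    · rw [h.cofacial_iff_of_position_le hF hn hcard hu hw huw]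
      lia
    · rw [cofacial_comm, h.cofacial_iff_of_position_le hF hn hcard hw hu hwu]
      lia

theorem image_position_left :
    F1.image (position n F F1 F2 q) = Icc (2 * n + 1) (3 * n) := by
  refine eq_of_subset_of_card_le
    (image_subset_iff.2 fun _ => h.position_left_mem_Icc hF hn hcard) ?_
  rw [card_image_of_injOn (h.injOn_position_left hF hn hcard), hF.card_of_mem h.left_mem,
    Nat.card_Icc]
  lia

theorem image_position_right : F2.image (position n F F1 F2 q) = range n := by
  refine eq_of_subset_of_card_le (image_subset_iff.2 fun y hy => ?_) ?_
  · obtain ⟨x, hx, rfl⟩ := h.exists_eq_map hy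
    exact mem_range.2 (h.position_map_lt hF hn hcard hx)
  · rw [card_image_of_injOn ((h.injOn_position hF hn hcard).mono (coe_subset.2 h.right_subset)),
      hF.card_of_mem h.right_mem, card_range]

end Counting

end IsAdmissibleGluing

end Gluing

section Kuhnel

open Finset

theorem bijOn_natCast_Ico (m a : ℕ) [NeZero m] :
    Set.BijOn (Nat.cast : ℕ → ZMod m) ↑(Ico a (a + m)) Set.univ := by
  have hinj : Set.InjOn (Nat.cast : ℕ → ZMod m) ↑(Ico a (a + m)) := by
    intro x hx y hy hxy
    rw [mem_coe, mem_Ico] at hx hy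
    refine ((ZMod.natCast_eq_natCast_iff x y m).1 hxy).eq_of_abs_lt ?_
    rw [abs_lt]
    lia
  refine ⟨Set.mapsTo_univ _ _, hinj, ?_⟩
  rw [← coe_univ]
  exact surjOn_of_injOn_of_card_le _ (fun _ _ => mem_univ _) hinj (by simp)

theorem image_range_natCast_add (m a k : ℕ) :
    (range k).image (fun i : ℕ => (a : ZMod m) + i) = (Ico a (a + k)).image Nat.cast := by
  have hshift := image_add_left_Ico 0 k a
  rw [add_zero] at hshift
  rw [range_eq_Ico, ← hshift, image_image]
  exact image_congr fun i _ => by simp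

theorem eq_of_add_one_notMem_image_range {m k : ℕ} {b x y : ZMod m} {K : Finset (ZMod m)}
    (hK : K = (range k).image (fun i : ℕ => b + i)) (hx : x ∈ K) (hx' : x + 1 ∉ K) (hy : y ∈ K)
    (hy' : y + 1 ∉ K) : x = y := by
  have hlast {z : ZMod m} (hz : z ∈ K) (hz' : z + 1 ∉ K) : z = b + (k - 1 : ℕ) := by
    rw [hK] at hz hz'
    obtain ⟨i, hi, rfl⟩ := mem_image.1 hz
    have hik : ¬ i + 1 < k := fun hik =>
      hz' (mem_image.2 ⟨i + 1, mem_range.2 hik, by push_cast; ring⟩)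
    rw [mem_range] at hi
    rw [show i = k - 1 by lia]
  rw [hlast hx hx', hlast hy hy']

variable {n a c : ℕ}

theorem injOn_natCast_Icc (n a : ℕ) :
    Set.InjOn (Nat.cast : ℕ → ZMod (2 * n + 1)) ↑(Icc a (a + n)) := by
  refine (bijOn_natCast_Ico (2 * n + 1) a).injOn.mono (coe_subset.2 fun p hp => ?_)
  rw [mem_Icc] at hp
  rw [mem_Ico]
  lia

theorem image_natCast_erase_ne_image_range (hac : a < c) (hca : c < a + n)
    (b : ZMod (2 * n + 1)) :
    ((Icc a (a + n)).erase c).image Nat.cast ≠ (range n).image (fun k : ℕ => b + k) := by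
  intro heq
  have hmem {p : ℕ} (hap : a ≤ p) (hpa : p ≤ a + n + 1) :
      (p : ZMod (2 * n + 1)) ∈ ((Icc a (a + n)).erase c).image Nat.cast ↔
        p ∈ (Icc a (a + n)).erase c := by
    rw [← mem_coe, coe_image, (bijOn_natCast_Ico (2 * n + 1) a).injOn.mem_image_iff, mem_coe]
    · intro r hr
      simp only [mem_coe, mem_erase, mem_Icc, mem_Ico] at hr ⊢
      lia
    · rw [mem_coe, mem_Ico]
      lia
  have hlast {p : ℕ} (hap : a ≤ p) (hpa : p ≤ a + n) (hp : p + 1 = c ∨ p = a + n) :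
      (p : ZMod (2 * n + 1)) ∈ ((Icc a (a + n)).erase c).image Nat.cast ∧
        (p : ZMod (2 * n + 1)) + 1 ∉ ((Icc a (a + n)).erase c).image Nat.cast := by
    rw [← Nat.cast_add_one, hmem hap (by lia), hmem (by lia) (by lia), mem_erase, mem_erase,
      mem_Icc, mem_Icc]
    lia
  obtain ⟨hgap, hgap'⟩ := hlast (p := c - 1) (by lia) (by lia) (by lia)
  obtain ⟨hright, hright'⟩ := hlast (p := a + n) (by lia) le_rfl (Or.inr rfl)
  have := injOn_natCast_Icc n a (by simp; lia) (by simp)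
    (eq_of_add_one_notMem_image_range heq hgap hgap' hright hright')
  lia

theorem kuhnelFacet_image_natCast_erase (hac : a < c) (hca : c < a + n) :
    KuhnelFacet n (((Icc a (a + n)).erase c).image Nat.cast) := by
  refine ⟨?_, ⟨a, ?_⟩, image_natCast_erase_ne_image_range hac hca⟩
  · rw [card_image_of_injOn ((injOn_natCast_Icc n a).mono (coe_subset.2 (erase_subset _ _))),
      card_erase_of_mem (by rw [mem_Icc]; lia), Nat.card_Icc]
    lia
  · rw [image_range_natCast_add]
    exact image_subset_image (erase_subset _ _)

theorem kuhnelFacet_iff {K : Finset (ZMod (2 * n + 1))} :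
    KuhnelFacet n K ↔ ∃ a c : ℕ, a ≤ 2 * n ∧ a < c ∧ c < a + n ∧
      K = ((Icc a (a + n)).erase c).image Nat.cast := by
  constructor
  · rintro ⟨hcard, ⟨b, hKb⟩, hne⟩
    obtain ⟨a, ha, rfl⟩ : ∃ a ≤ 2 * n, (a : ZMod (2 * n + 1)) = b :=
      ⟨b.val, Nat.le_of_lt_succ b.val_lt, ZMod.natCast_zmod_val b⟩
    rw [image_range_natCast_add, ← add_assoc, Ico_add_one_right_eq_Icc] at hKb
    obtain ⟨P, hPa, rfl⟩ := subset_image_iff.1 hKb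
    rw [card_image_of_injOn ((injOn_natCast_Icc n a).mono (coe_subset.2 hPa))] at hcard
    obtain ⟨c, hc, hins⟩ := exists_eq_insert_iff.2 ⟨hPa, by rw [hcard, Nat.card_Icc]; lia⟩
    have hcI : c ∈ Icc a (a + n) := hins ▸ mem_insert_self c P
    obtain rfl : P = (Icc a (a + n)).erase c := by rw [← hins, erase_insert hc]
    have hca : c ≠ a := by
      rintro rfl
      refine hne (c + 1 : ℕ) ?_
      rw [image_range_natCast_add, Icc_erase_left, add_right_comm,
        Ico_add_one_add_one_eq_Ioc]
    have hcn : c ≠ a + n := by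
      rintro rfl
      refine hne a ?_
      rw [image_range_natCast_add, Icc_erase_right]
    rw [mem_Icc] at hcI
    exact ⟨a, c, ha, by lia, by lia, rfl⟩
  · rintro ⟨a, c, -, hac, hca, rfl⟩
    exact kuhnelFacet_image_natCast_erase hac hca

end Kuhnel

section Quotient

open Finset

variable {V : Type*} [DecidableEq V] {n : ℕ} {F : Finset (Finset V)} {F1 F2 S : Finset V}
  {φ q : V → V} {u : V}

/-- The vertex of Kühnel's complex that corresponds to a vertex of `F`: its position modulo
`2n + 1`. -/
def residue (n : ℕ) (F : Finset (Finset V)) (F1 F2 : Finset V) (q : V → V) (u : V) :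
    ZMod (2 * n + 1) :=
  position n F F1 F2 q u

namespace IsAdmissibleGluing

variable (h : IsAdmissibleGluing F F1 F2 φ q) (hF : IsStackedSphere n F) (hn : 3 ≤ n)
  (hcard : #(F.biUnion id) = 3 * n + 1)

include h hF hn hcard

theorem residue_map (u : V) : residue n F F1 F2 q (q u) = residue n F F1 F2 q u := by
  by_cases hu : u ∈ F2
  · obtain ⟨x, hx, rfl⟩ := h.exists_eq_map hu
    rw [h.fold x hx, residue, residue, h.position_eq_position_map_add hF hn hcard hx,
      Nat.cast_add, ZMod.natCast_self, add_zero]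
  · rw [h.fix u hu]

theorem bijOn_position_sdiff :
    Set.BijOn (position n F F1 F2 q) ↑(F.biUnion id \ F2) ↑(Ico n (n + (2 * n + 1))) := by
  have hbij := (h.isPathLayout_position hF hn hcard).bijOn
  have himage : (F.biUnion id \ F2).image (position n F F1 F2 q) = Ico n (n + (2 * n + 1)) := by
    have hall : (F.biUnion id).image (position n F F1 F2 q) = Iic (3 * n) := by
      rw [← coe_inj, coe_image, hbij.image_eq, coe_Iic]
    rw [image_sdiff_of_injOn hbij.injOn h.right_subset, hall, h.image_position_right hF hn hcard]
    ext p
    rw [mem_sdiff, mem_Iic, mem_range, mem_Ico]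
    lia
  rw [← himage, coe_image]
  exact (hbij.injOn.mono (coe_subset.2 sdiff_subset)).bijOn_image

theorem bijOn_residue : Set.BijOn (residue n F F1 F2 q) ↑(F.biUnion id \ F2) Set.univ :=
  (bijOn_natCast_Ico (2 * n + 1) n).comp (h.bijOn_position_sdiff hF hn hcard)

theorem mem_facets_iff : S ∈ (F.erase F1).erase F2 ↔ S ⊆ F.biUnion id ∧
    ∃ a c, a ≤ 2 * n ∧ a < c ∧ c < a + n ∧
      S.image (position n F F1 F2 q) = (Icc a (a + n)).erase c := by
  have hlast : F1.image (position n F F1 F2 q) = Icc (3 * n + 1 - n) (3 * n) := by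
    rw [h.image_position_left hF hn hcard, show 3 * n + 1 - n = 2 * n + 1 by lia]
  have hiff := (h.isPathLayout_position hF hn hcard).mem_and_ne_ends_iff hF hn (S := S) h.left_mem
    h.right_mem hlast (h.image_position_right hF hn hcard)
  have hrange (a : ℕ) : a + n ≤ 3 * n ↔ a ≤ 2 * n := by lia
  simp only [hrange] at hiff
  rw [← hiff, mem_erase, mem_erase]
  tauto

theorem mem_quotient_iff (hS : S ⊆ F.biUnion id \ F2) :
    S ∈ ((F.erase F1).erase F2).image (fun T => T.image q) ↔
      KuhnelFacet n (S.image (residue n F F1 F2 q)) := by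
  have hcast (T : Finset V) : T.image (residue n F F1 F2 q) =
      (T.image (position n F F1 F2 q)).image Nat.cast := image_image.symm
  have hglue (T : Finset V) :
      (T.image q).image (residue n F F1 F2 q) = T.image (residue n F F1 F2 q) := by
    rw [image_image]
    exact image_congr fun u _ => h.residue_map hF hn hcard u
  rw [mem_image, kuhnelFacet_iff]
  constructor
  · rintro ⟨T, hT, rfl⟩
    obtain ⟨-, a, c, ha, hac, hca, hTpos⟩ := (h.mem_facets_iff hF hn hcard).1 hT
    exact ⟨a, c, ha, hac, hca, by rw [hglue, hcast, hTpos]⟩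
  · rintro ⟨a, c, ha, hac, hca, hSres⟩
    obtain ⟨T, hT, hTpos⟩ := (h.isPathLayout_position hF hn hcard).exists_image_eq
      (P := (Icc a (a + n)).erase c) fun p hp => by
        rw [mem_erase, mem_Icc] at hp
        lia
    refine ⟨T, (h.mem_facets_iff hF hn hcard).2 ⟨hT, a, c, ha, hac, hca, hTpos⟩, ?_⟩
    have hTq : T.image q ⊆ F.biUnion id \ F2 :=
      image_subset_iff.2 fun u hu => h.map_mem_sdiff (hT hu)
    have hres : (T.image q).image (residue n F F1 F2 q) = S.image (residue n F F1 F2 q) := by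
      rw [hglue, hcast, hTpos, hSres]
    exact image_injOn_powerset_of_injOn (h.bijOn_residue hF hn hcard).injOn
      (mem_coe.2 (mem_powerset.2 hTq)) (mem_coe.2 (mem_powerset.2 hS)) hres

end IsAdmissibleGluing

end Quotient

theorem miss_unique_general {V : Type*} [DecidableEq V] (n : ℕ) (hn : 3 ≤ n)
    (F : Finset (Finset V)) (hF : IsStackedSphere n F)
    (hcard : (F.biUnion id).card = 3 * n + 1)
    (F1 F2 : Finset V) (hF1 : F1 ∈ F) (hF2 : F2 ∈ F)
    (φ : V → V) (hφ : Set.BijOn φ ↑F1 ↑F2)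
    (hdist : ∀ v ∈ F1, 3 ≤ (famSkeleton F).dist v (φ v))
    (q : V → V) (hq1 : ∀ w, w ∉ F2 → q w = w) (hq2 : ∀ v ∈ F1, q (φ v) = v)
    (M : Finset (Finset V)) (hM : M = ((F.erase F1).erase F2).image (fun S => S.image q)) :
    ∃ ψ : V → ZMod (2 * n + 1),
      Set.BijOn ψ ↑(F.biUnion id \ F2) Set.univ ∧
      ∀ S : Finset V, S ⊆ F.biUnion id \ F2 →
        (S ∈ M ↔ KuhnelFacet n (S.image ψ)) := by
  have h : IsAdmissibleGluing F F1 F2 φ q :=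
    { left_mem := hF1
      right_mem := hF2
      bijOn := hφ
      not_cofacial_of_cofacial := fun x hx z hxz hzφ =>
        absurd (dist_famSkeleton_le_two hxz hzφ) (by have := hdist x hx; lia)
      fix := hq1
      fold := hq2 }
  exact ⟨residue n F F1 F2 q, h.bijOn_residue hF hn hcard,
    fun S hS => by rw [hM, h.mem_quotient_iff hF hn hcard hS]⟩

/-- uniqueness of the MISS: let `F` be a stacked `(n-1)`-sphere
(`n ≥ 5`) with `3n+1` vertices, let `F₁ ≠ F₂` be facets of `F`, `φ : F₁ → F₂` a
bijection moving every vertex to distance `≥ 3` in the 1-skeleton, `q` the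
vertex map which is the identity off `F₂` and sends `φ(v)` back to `v`, and let
`M` be the resulting identified stacked sphere on the `2n+1` vertices
`V(F) \ F₂`.  Then `M` is combinatorially isomorphic to Kühnel's complex `K_n`. -/
theorem miss_unique {V : Type*} [DecidableEq V] (n : ℕ) (hn : 5 ≤ n)
    (F : Finset (Finset V)) (hF : IsStackedSphere n F)
    (hcard : (F.biUnion id).card = 3 * n + 1)
    (F1 F2 : Finset V) (hF1 : F1 ∈ F) (hF2 : F2 ∈ F) (hne : F1 ≠ F2)
    (φ : V → V) (hφ : Set.BijOn φ ↑F1 ↑F2)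
    (hdist : ∀ v ∈ F1, 3 ≤ (famSkeleton F).dist v (φ v))
    (q : V → V) (hq1 : ∀ w, w ∉ F2 → q w = w) (hq2 : ∀ v ∈ F1, q (φ v) = v)
    (M : Finset (Finset V)) (hM : M = ((F.erase F1).erase F2).image (fun S => S.image q)) :
    ∃ ψ : V → ZMod (2 * n + 1),
      Set.BijOn ψ ↑(F.biUnion id \ F2) Set.univ ∧
      ∀ S : Finset V, S ⊆ F.biUnion id \ F2 →
        (S ∈ M ↔ KuhnelFacet n (S.image ψ)) :=
  miss_unique_general n (by lia) F hF hcard F1 F2 hF1 hF2 φ hφ hdist q hq1 hq2 M hM
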